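/- Let p be a probability mass function on a finite product space 𝒳_W × 𝒳_Y × 𝒳_Z × 𝒳_U with coordinate variables W, Y, Z, U, and let c ∈ 𝒳_Z and u₀ ∈ 𝒳_U. Assume p(y, c, u) > 0 for all y ∈ 𝒳_Y and u ∈ 𝒳_U. If the context-specific independence W ⊥ Y | (Z, U) = (c, u₀) holds, and the context-specific independence W ⊥ U | Y, Z = c holds (i.e., p(w | y, c, u) = p(w | y, c) for all w, y, u), then for every u ∈ 𝒳_U the context-specific independence W ⊥ Y | (Z, U) = (c, u) holds. -/

import Mathlib

open Finset

/-- Implicit CSI: assume `p(y, c, u) > 0` for all `y, u`.  If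
`W ⊥ Y ∣ (Z, U) = (c, u₀)` holds, and `W ⊥ U ∣ Y, Z = c` holds
(i.e. `p(w ∣ y, c, u) = p(w ∣ y, c)` for all `w, y, u`), then for every `u ∈ 𝒳_U` the
context-specific independence `W ⊥ Y ∣ (Z, U) = (c, u)` holds. -/
theorem stmt7 {XW XY XZ XU : Type} [Fintype XW] [Fintype XY] [Fintype XZ] [Fintype XU]
    (p : XW → XY → XZ → XU → ℝ)
    (hp0 : ∀ w y z u, 0 ≤ p w y z u)
    (hp1 : ∑ w, ∑ y, ∑ z, ∑ u, p w y z u = 1)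
    (c : XZ) (u₀ : XU)
    (hpos : ∀ y u, (∑ w, p w y c u) > 0)
    -- W ⊥ Y ∣ (Z, U) = (c, u₀)
    (h1 : ∀ w y, (∑ w', p w' y c u₀) > 0 →
      p w y c u₀ / (∑ w', p w' y c u₀) =
        (∑ y', p w y' c u₀) / (∑ w', ∑ y', p w' y' c u₀))
    -- W ⊥ U ∣ Y, Z = c
    (h2 : ∀ w y u, p w y c u / (∑ w', p w' y c u) =
      (∑ u', p w y c u') / (∑ w', ∑ u', p w' y c u')) :
    ∀ u : XU, ∀ w y, (∑ w', p w' y c u) > 0 →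
      p w y c u / (∑ w', p w' y c u) =
        (∑ y', p w y' c u) / (∑ w', ∑ y', p w' y' c u) := by
  intro u w y hy
  have key : ∀ y', p w y' c u / (∑ w', p w' y' c u) =
      (∑ y', p w y' c u₀) / (∑ w', ∑ y', p w' y' c u₀) := fun y' => by
    rw [h2 w y' u, ← h2 w y' u₀, h1 w y' (hpos y' u₀)]
  rw [key y]
  generalize (∑ y', p w y' c u₀) / (∑ w', ∑ y', p w' y' c u₀) = K at key
  have hK : ∀ y', p w y' c u = K * ∑ w', p w' y' c u := fun y' =>
    (div_eq_iff (hpos y' u).ne').1 (key y')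
  have hS : 0 < ∑ y', ∑ w', p w' y' c u :=
    Finset.sum_pos (fun y' _ => hpos y' u) ⟨y, Finset.mem_univ y⟩
  rw [Finset.sum_comm (f := fun w' y' => p w' y' c u), eq_div_iff hS.ne', Finset.mul_sum]
  exact Finset.sum_congr rfl fun y' _ => (hK y').symm
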